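/- Let F : E → ℝ be L-smooth with minimizer x*, and ν-RSI for some ν > 0: ⟨∇F(x), x − x*⟩ ≥ ν‖x − x*‖² for all x. Then for every γ with 0 < γ < 2ν/L, F is (γ, ν/γ − L/2)-strongly quasar convex with respect to x*. -/

import Mathlib

open scoped RealInnerProductSpace

/-!
By `L`-smoothness at the critical point `xstar`, the gap `F x - F xstar` is at most
`L / 2 * ‖x - xstar‖ ^ 2`. The restricted secant inequality makes
`(1 / γ) * ⟪gradient F x, xstar - x⟫` at most `-(ν / γ) * ‖x - xstar‖ ^ 2`. Adding the two bounds
leaves a surplus of `(ν / γ - L / 2) * ‖x - xstar‖ ^ 2`, which is twice what the quadratic term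
of strong quasar convexity asks for.
-/

section Taylor

variable {E G : Type*} [NormedAddCommGroup E] [NormedSpace ℝ E]
  [NormedAddCommGroup G] [NormedSpace ℝ G]

theorem norm_image_sub_sub_le_of_norm_hasFDerivWithin_sub_le {f : E → G} {f' : E → E →L[ℝ] G}
    {s : Set E} {x y : E} {L : ℝ} (hs : Convex ℝ s)
    (hf : ∀ z ∈ s, HasFDerivWithinAt f (f' z) s z)
    (bound : ∀ z ∈ s, ‖f' z - f' x‖ ≤ L * ‖z - x‖) (hx : x ∈ s) (hy : y ∈ s) :
    ‖f y - f x - f' x (y - x)‖ ≤ L / 2 * ‖y - x‖ ^ 2 := by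
  let line : ℝ → E := AffineMap.lineMap x y
  let r : ℝ → G := fun t ↦ f (line t) - f x - t • f' x (y - x)
  have hline_maps : Set.MapsTo line (Set.Icc 0 1) s := fun t ht ↦ hs.lineMap_mem hx hy ht
  have hr_deriv : ∀ t ∈ Set.Icc (0 : ℝ) 1,
      HasDerivWithinAt r ((f' (line t) - f' x) (y - x)) (Set.Icc 0 1) t := by
    intro t ht
    have hfline := (hf (line t) (hline_maps ht)).comp_hasDerivWithinAt t
      AffineMap.hasDerivWithinAt_lineMap hline_maps
    have hlinear := (hasDerivWithinAt_id t (Set.Icc 0 1)).smul_const (f' x (y - x))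
    exact ((hfline.sub_const (f x)).sub hlinear).congr_deriv (by rw [one_smul, sub_apply])
  have hr_bound : ∀ t ∈ Set.Ico (0 : ℝ) 1,
      ‖(f' (line t) - f' x) (y - x)‖ ≤ L * ‖y - x‖ ^ 2 * t := by
    intro t ht
    calc ‖(f' (line t) - f' x) (y - x)‖
        ≤ ‖f' (line t) - f' x‖ * ‖y - x‖ := ContinuousLinearMap.le_opNorm _ _
      _ ≤ L * ‖line t - x‖ * ‖y - x‖ := by
        gcongr
        exact bound _ (hline_maps (Set.Ico_subset_Icc_self ht))
      _ = L * ‖y - x‖ ^ 2 * t := by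
        rw [← dist_eq_norm (line t), dist_lineMap_left, dist_eq_norm', Real.norm_of_nonneg ht.1]
        ring
  have hparabola_deriv : ∀ t : ℝ,
      HasDerivAt (fun t ↦ L / 2 * ‖y - x‖ ^ 2 * t ^ 2) (L * ‖y - x‖ ^ 2 * t) t := fun t ↦
    ((hasDerivAt_pow 2 t).const_mul (L / 2 * ‖y - x‖ ^ 2)).congr_deriv (by push_cast; ring)
  have hr_one := image_norm_le_of_norm_deriv_right_le_deriv_boundary
    (fun t ht ↦ (hr_deriv t ht).continuousWithinAt)
    (fun t ht ↦ (hr_deriv t (Set.Ico_subset_Icc_self ht)).mono_of_mem_nhdsWithin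
      (Icc_mem_nhdsGE_of_mem ht))
    (by simp [r, line]) hparabola_deriv hr_bound (Set.right_mem_Icc.2 zero_le_one)
  simpa [r, line] using hr_one

end Taylor

theorem norm_fderiv_sub_fderiv_eq_norm_gradient_sub_gradient {𝕜 E : Type*} [RCLike 𝕜]
    [NormedAddCommGroup E] [InnerProductSpace 𝕜 E] [CompleteSpace E] (F : E → 𝕜) (x y : E) :
    ‖fderiv 𝕜 F x - fderiv 𝕜 F y‖ = ‖gradient F x - gradient F y‖ := by
  rw [← toDual_gradient, ← toDual_gradient, ← map_sub, LinearIsometryEquiv.norm_map]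

section QuasarConvex

variable {E : Type*} [NormedAddCommGroup E] [InnerProductSpace ℝ E] [CompleteSpace E]
  {F : E → ℝ} {xstar : E} {L γ μ μ' ν : ℝ}

theorem le_add_inner_gradient_add_of_norm_gradient_sub_le {x : E} (hF : Differentiable ℝ F)
    (hLip : ∀ z, ‖gradient F z - gradient F x‖ ≤ L * ‖z - x‖) (y : E) :
    F y ≤ F x + ⟪gradient F x, y - x⟫ + L / 2 * ‖y - x‖ ^ 2 := by
  have htaylor : ‖F y - F x - fderiv ℝ F x (y - x)‖ ≤ L / 2 * ‖y - x‖ ^ 2 :=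
    norm_image_sub_sub_le_of_norm_hasFDerivWithin_sub_le convex_univ
      (fun z _ ↦ (hF z).hasFDerivAt.hasFDerivWithinAt)
      (fun z _ ↦ (norm_fderiv_sub_fderiv_eq_norm_gradient_sub_gradient F z x).trans_le (hLip z))
      (Set.mem_univ x) (Set.mem_univ y)
  rw [inner_gradient_left]
  linarith [(Real.le_norm_self _).trans htaylor]

theorem gradient_eq_zero_of_isLocalMin (hmin : IsLocalMin F xstar) : gradient F xstar = 0 := by
  rw [gradient, hmin.fderiv_eq_zero, map_zero]

/-- The `ν`-restricted secant inequality (RSI) with respect to `xstar`: the gradient grows at least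
linearly in the direction away from `xstar`. -/
def RestrictedSecantInequality (F : E → ℝ) (xstar : E) (ν : ℝ) : Prop :=
  ∀ x, ν * ‖x - xstar‖ ^ 2 ≤ ⟪gradient F x, x - xstar⟫

/-- `(γ, μ)`-strong quasar convexity with respect to `xstar`: strong convexity tested only against
`xstar`, with the gradient scaled by `1 / γ`. Only the inequality is recorded; the ranges of `γ` and
`μ`, and the minimality of `xstar`, are hypotheses where they matter. -/
def StronglyQuasarConvex (F : E → ℝ) (xstar : E) (γ μ : ℝ) : Prop :=
  ∀ x, F x + 1 / γ * ⟪gradient F x, xstar - x⟫ + μ / 2 * ‖xstar - x‖ ^ 2 ≤ F xstar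

theorem StronglyQuasarConvex.mono (h : StronglyQuasarConvex F xstar γ μ) (hμ : μ' ≤ μ) :
    StronglyQuasarConvex F xstar γ μ' := fun x ↦
  le_trans (by gcongr) (h x)

theorem RestrictedSecantInequality.one_div_mul_inner_le (h : RestrictedSecantInequality F xstar ν)
    (hγ : 0 < γ) (x : E) :
    1 / γ * ⟪gradient F x, xstar - x⟫ ≤ -(ν / γ * ‖xstar - x‖ ^ 2) := by
  calc 1 / γ * ⟪gradient F x, xstar - x⟫
      = -(1 / γ * ⟪gradient F x, x - xstar⟫) := by
        rw [← neg_sub x xstar, inner_neg_right, mul_neg]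
    _ ≤ -(1 / γ * (ν * ‖x - xstar‖ ^ 2)) := by
        gcongr
        exact h x
    _ = -(ν / γ * ‖xstar - x‖ ^ 2) := by
        rw [norm_sub_rev]
        ring

theorem RestrictedSecantInequality.stronglyQuasarConvex
    (h : RestrictedSecantInequality F xstar ν) (hγ : 0 < γ)
    (hupper : ∀ x, F x ≤ F xstar + L / 2 * ‖x - xstar‖ ^ 2) :
    StronglyQuasarConvex F xstar γ (2 * (ν / γ - L / 2)) := by
  intro x
  have hgap := hupper x
  rw [norm_sub_rev] at hgap
  linarith [h.one_div_mul_inner_le hγ x]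

theorem stmt_14_general (hF : Differentiable ℝ F)
    (hLip : ∀ x, ‖gradient F x - gradient F xstar‖ ≤ L * ‖x - xstar‖)
    (hmin : IsLocalMin F xstar) (hRSI : RestrictedSecantInequality F xstar ν) (hγ : 0 < γ) :
    StronglyQuasarConvex F xstar γ (2 * (ν / γ - L / 2)) := by
  refine hRSI.stronglyQuasarConvex hγ fun x ↦ ?_
  simpa only [gradient_eq_zero_of_isLocalMin hmin, inner_zero_left, add_zero] using
    le_add_inner_gradient_add_of_norm_gradient_sub_le hF hLip x

end QuasarConvex

/-- an `L`-smooth, `ν`-RSI function is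
`(γ, ν/γ - L/2)`-strongly quasar convex for every `0 < γ < 2ν/L`. -/
theorem stmt_14 {E : Type*} [NormedAddCommGroup E] [InnerProductSpace ℝ E]
    [FiniteDimensional ℝ E]
    (F : E → ℝ) (hF : Differentiable ℝ F)
    (L ν : ℝ) (hL : 0 < L) (hν : 0 < ν)
    (hLip : ∀ x y : E, ‖gradient F x - gradient F y‖ ≤ L * ‖x - y‖)
    (xstar : E) (hmin : ∀ x : E, F xstar ≤ F x)
    (hRSI : ∀ x : E, ⟪gradient F x, x - xstar⟫ ≥ ν * ‖x - xstar‖ ^ 2) :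
    ∀ γ : ℝ, 0 < γ → γ < 2 * ν / L →
      ∀ x : E, F xstar ≥ F x + (1 / γ) * ⟪gradient F x, xstar - x⟫
        + (ν / γ - L / 2) / 2 * ‖xstar - x‖ ^ 2 := by
  intro γ hγ hγL
  have hμ : 0 ≤ ν / γ - L / 2 := by
    rw [lt_div_iff₀ hL] at hγL
    rw [sub_nonneg, le_div_iff₀ hγ]
    linarith
  have hsqc : StronglyQuasarConvex F xstar γ (2 * (ν / γ - L / 2)) :=
    stmt_14_general hF (hLip · xstar) (.of_forall hmin) hRSI hγ
  exact hsqc.mono (by linarith)
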